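/- arXiv:2101.02036 — 2 statements merged into one kernel-verified Lean document; each statement's English description precedes it below -/
import Mathlib

section
/- Let a > 4 be a real number and let f_a : ℝ → ℝ be the quadratic (logistic) map f_a(x) = a·x·(1−x). Assume that |f_a'(x)| > 1 for every x ∈ [0,1] with f_a(x) ≤ 1. Then the set Λ = {x ∈ [0,1] : for all n ∈ ℕ, f_a^[n](x) ∈ [0,1]} is a Cantor set: it is closed, totally disconnected, and perfect (has no isolated points). -/
/-- The quadratic (logistic) map. -/
def logisticMap (a : ℝ) : ℝ → ℝ := fun x => a * x * (1 - x)

/-- The points of `[0,1]` whose whole forward orbit under the logistic map stays in `[0,1]`. -/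
def logisticInvariantSet (a : ℝ) : Set ℝ :=
  {x : ℝ | x ∈ Set.Icc (0 : ℝ) 1 ∧ ∀ n : ℕ, (logisticMap a)^[n] x ∈ Set.Icc (0 : ℝ) 1}

/-- The minimal slope of the logistic map on `{x | logisticMap a x ≤ 1}`. -/
noncomputable def logisticMinSlope (a : ℝ) : ℝ := a * √(1 - 4 / a)

lemma continuous_logisticMap (a : ℝ) : Continuous (logisticMap a) := by
  unfold logisticMap
  fun_prop

lemma logisticMap_one_sub (a x : ℝ) : logisticMap a (1 - x) = logisticMap a x := by
  simp only [logisticMap]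
  ring

lemma hasDerivAt_logisticMap (a x : ℝ) : HasDerivAt (logisticMap a) (a * (1 - 2 * x)) x := by
  have h := ((hasDerivAt_id x).const_mul a).mul ((hasDerivAt_id x).const_sub 1)
  exact h.congr_deriv (by simp only [id]; ring)

lemma sq_one_sub_two_mul {a : ℝ} (ha : a ≠ 0) (x : ℝ) :
    (1 - 2 * x) ^ 2 = 1 - 4 * logisticMap a x / a := by
  simp only [logisticMap]
  field_simp
  ring

lemma mem_logisticInvariantSet_iff {a x : ℝ} :
    x ∈ logisticInvariantSet a ↔
      x ∈ Set.Icc (0 : ℝ) 1 ∧ logisticMap a x ∈ logisticInvariantSet a := by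
  constructor
  · rintro ⟨hx, h⟩
    exact ⟨hx, h 1, fun n => h (n + 1)⟩
  · rintro ⟨hx, -, h⟩
    refine ⟨hx, fun n => ?_⟩
    cases n with
    | zero => exact hx
    | succ n => exact h n

lemma one_sub_mem_logisticInvariantSet {a x : ℝ} (hx : x ∈ logisticInvariantSet a) :
    1 - x ∈ logisticInvariantSet a := by
  rw [mem_logisticInvariantSet_iff] at hx ⊢
  rw [logisticMap_one_sub]
  exact ⟨⟨by linarith [hx.1.2], by linarith [hx.1.1]⟩, hx.2⟩

lemma half_notMem_logisticInvariantSet {a : ℝ} (ha : 4 < a) :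
    (1 / 2 : ℝ) ∉ logisticInvariantSet a := by
  intro h
  have h1 := (mem_logisticInvariantSet_iff.1 h).2.1.2
  simp only [logisticMap] at h1
  linarith

lemma isClosed_logisticInvariantSet (a : ℝ) : IsClosed (logisticInvariantSet a) := by
  have h : logisticInvariantSet a =
      Set.Icc (0 : ℝ) 1 ∩ ⋂ n : ℕ, (logisticMap a)^[n] ⁻¹' Set.Icc (0 : ℝ) 1 := by
    ext x
    simp only [logisticInvariantSet, Set.mem_ofPred_eq, Set.mem_inter_iff, Set.mem_iInter,
      Set.mem_preimage]
  rw [h]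
  exact isClosed_Icc.inter (isClosed_iInter fun n =>
    isClosed_Icc.preimage ((continuous_logisticMap a).iterate n))

/-- Points on the same side of `1 / 2` with images at most `1` are pushed apart. -/
lemma logisticMinSlope_mul_abs_sub_le {a x y : ℝ} (ha : 0 < a) (hx : logisticMap a x ≤ 1)
    (hy : logisticMap a y ≤ 1) (hxy : 0 ≤ (1 - 2 * x) * (1 - 2 * y)) :
    logisticMinSlope a * |x - y| ≤ |logisticMap a x - logisticMap a y| := by
  have key : ∀ z, logisticMap a z ≤ 1 → √(1 - 4 / a) ≤ |1 - 2 * z| := by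
    intro z hz
    rw [← Real.sqrt_sq_eq_abs, sq_one_sub_two_mul ha.ne']
    apply Real.sqrt_le_sqrt
    gcongr
    linarith
  have hs : √(1 - 4 / a) ≤ |1 - x - y| := by
    have h : |(1 - 2 * x) + (1 - 2 * y)| = |1 - 2 * x| + |1 - 2 * y| :=
      (abs_add_eq_add_abs_iff _ _).2 (mul_nonneg_iff.1 hxy)
    have h' : (1 - 2 * x) + (1 - 2 * y) = 2 * (1 - x - y) := by ring
    rw [h', abs_mul, abs_two] at h
    linarith [key x hx, key y hy]
  have hf : logisticMap a x - logisticMap a y = a * (1 - x - y) * (x - y) := by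
    simp only [logisticMap]
    ring
  rw [hf, abs_mul, abs_mul, abs_of_pos ha, logisticMinSlope]
  gcongr

lemma one_lt_logisticMinSlope {a : ℝ} (ha : 4 < a)
    (hderiv : ∀ x ∈ Set.Icc (0 : ℝ) 1, logisticMap a x ≤ 1 → 1 < |deriv (logisticMap a) x|) :
    1 < logisticMinSlope a := by
  have ha0 : 0 < a := by linarith
  have h4 : 4 / a ≤ 1 := (div_le_one ha0).2 ha.le
  have hs0 : 0 ≤ √(1 - 4 / a) := Real.sqrt_nonneg _
  have hs1 : √(1 - 4 / a) ≤ 1 := Real.sqrt_le_one.2 (by linarith [div_pos four_pos ha0])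
  have hsq : √(1 - 4 / a) ^ 2 = 1 - 4 / a := Real.sq_sqrt (by linarith)
  have h := hderiv ((1 - √(1 - 4 / a)) / 2) ⟨by linarith, by linarith⟩ (by
    have : logisticMap a ((1 - √(1 - 4 / a)) / 2) = a * (1 - √(1 - 4 / a) ^ 2) / 4 := by
      simp only [logisticMap]
      ring
    rw [this, hsq]
    field_simp
    norm_num)
  rw [(hasDerivAt_logisticMap a _).deriv] at h
  have h2 : a * (1 - 2 * ((1 - √(1 - 4 / a)) / 2)) = a * √(1 - 4 / a) := by ring
  rwa [h2, abs_of_nonneg (mul_nonneg ha0.le hs0)] at h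

/-- Each point of `[0,1]` has a preimage in `[0,1]` on any prescribed side of `1 / 2`. -/
lemma exists_logisticMap_eq {a z : ℝ} (ha : 4 < a) (hz : z ∈ Set.Icc (0 : ℝ) 1) (p : ℝ) :
    ∃ q ∈ Set.Icc (0 : ℝ) 1, logisticMap a q = z ∧ 0 ≤ (1 - 2 * p) * (1 - 2 * q) := by
  have ha0 : 0 < a := by linarith
  have h4 : 4 * z / a ≤ 1 := (div_le_one ha0).2 (by linarith [hz.2])
  have h0 : 0 ≤ 4 * z / a := div_nonneg (by linarith [hz.1]) ha0.le
  obtain ⟨s, hs⟩ : ∃ s, s = √(1 - 4 * z / a) := ⟨_, rfl⟩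
  have hs0 : 0 ≤ s := hs ▸ Real.sqrt_nonneg _
  have hs1 : s ≤ 1 := hs ▸ Real.sqrt_le_one.2 (by linarith)
  have hsq : s ^ 2 = 1 - 4 * z / a := hs ▸ Real.sq_sqrt (by linarith)
  have hleft : logisticMap a ((1 - s) / 2) = z := by
    have : logisticMap a ((1 - s) / 2) = a * (1 - s ^ 2) / 4 := by
      simp only [logisticMap]
      ring
    rw [this, hsq]
    field_simp
    ring
  rcases le_total 0 (1 - 2 * p) with hp | hp
  · exact ⟨(1 - s) / 2, ⟨by linarith, by linarith⟩, hleft,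
      mul_nonneg hp (by linarith)⟩
  · exact ⟨1 - (1 - s) / 2, ⟨by linarith, by linarith⟩, by rw [logisticMap_one_sub, hleft],
      mul_nonneg_of_nonpos_of_nonpos hp (by linarith)⟩

/-- An interval inside the invariant set is mapped onto a set containing a longer such interval. -/
lemma exists_longer_Icc_subset {a x y : ℝ} (ha : 4 < a) (hxy : x ≤ y)
    (h : Set.Icc x y ⊆ logisticInvariantSet a) :
    ∃ u v : ℝ, u ≤ v ∧ Set.Icc u v ⊆ logisticInvariantSet a ∧
      logisticMinSlope a * (y - x) ≤ v - u := by
  have hx := mem_logisticInvariantSet_iff.1 (h (Set.left_mem_Icc.2 hxy))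
  have hy := mem_logisticInvariantSet_iff.1 (h (Set.right_mem_Icc.2 hxy))
  have hside : 0 ≤ (1 - 2 * x) * (1 - 2 * y) := by
    by_contra! hneg
    refine half_notMem_logisticInvariantSet ha (h ⟨?_, ?_⟩) <;> by_contra! <;> nlinarith
  have hexp := logisticMinSlope_mul_abs_sub_le (by linarith) hx.2.1.2 hy.2.1.2 hside
  rw [abs_sub_comm x y, abs_of_nonneg (sub_nonneg.2 hxy)] at hexp
  have himage : Set.uIcc (logisticMap a x) (logisticMap a y) ⊆ logisticInvariantSet a := by
    intro w hw
    obtain ⟨t, ht, rfl⟩ := intermediate_value_uIcc (continuous_logisticMap a).continuousOn hw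
    rw [Set.uIcc_of_le hxy] at ht
    exact (mem_logisticInvariantSet_iff.1 (h ht)).2
  exact ⟨_, _, min_le_max, himage, by rwa [max_sub_min_eq_abs']⟩

lemma not_Icc_subset_logisticInvariantSet {a x y : ℝ} (ha : 4 < a)
    (hslope : 1 < logisticMinSlope a) (hxy : x < y) :
    ¬ Set.Icc x y ⊆ logisticInvariantSet a := by
  intro h
  have grow : ∀ n : ℕ, ∃ u v : ℝ, u ≤ v ∧ Set.Icc u v ⊆ logisticInvariantSet a ∧
      logisticMinSlope a ^ n * (y - x) ≤ v - u := by
    intro n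
    induction n with
    | zero => exact ⟨x, y, hxy.le, h, by simp⟩
    | succ n ih =>
      obtain ⟨u, v, huv, hsub, hlen⟩ := ih
      obtain ⟨u', v', huv', hsub', hlen'⟩ := exists_longer_Icc_subset ha huv hsub
      refine ⟨u', v', huv', hsub', le_trans ?_ hlen'⟩
      rw [pow_succ', mul_assoc]
      gcongr
  obtain ⟨n, hn⟩ := pow_unbounded_of_one_lt (1 / (y - x)) hslope
  obtain ⟨u, v, huv, hsub, hlen⟩ := grow n
  rw [div_lt_iff₀ (sub_pos.2 hxy)] at hn
  linarith [(hsub (Set.left_mem_Icc.2 huv)).1.1, (hsub (Set.right_mem_Icc.2 huv)).1.2]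

lemma exists_ne_mem_logisticInvariantSet {a : ℝ} (ha : 4 < a) (hslope : 0 < logisticMinSlope a)
    (n : ℕ) {p : ℝ} (hp : p ∈ logisticInvariantSet a) :
    ∃ q ∈ logisticInvariantSet a, q ≠ p ∧ logisticMinSlope a ^ n * |q - p| ≤ 1 := by
  induction n generalizing p with
  | zero =>
    refine ⟨1 - p, one_sub_mem_logisticInvariantSet hp, fun h => ?_, ?_⟩
    · refine half_notMem_logisticInvariantSet ha ?_
      rwa [show (1 / 2 : ℝ) = p by linarith]
    · rw [pow_zero, one_mul, abs_le]
      constructor <;> linarith [hp.1.1, hp.1.2]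
  | succ n ih =>
    have hfp := (mem_logisticInvariantSet_iff.1 hp).2
    obtain ⟨z, hz, hzne, hdist⟩ := ih hfp
    obtain ⟨q, hq, rfl, hside⟩ := exists_logisticMap_eq ha hz.1 p
    refine ⟨q, mem_logisticInvariantSet_iff.2 ⟨hq, hz⟩, fun h => hzne (by rw [h]), ?_⟩
    rw [pow_succ, mul_assoc]
    refine le_trans ?_ hdist
    gcongr
    exact logisticMinSlope_mul_abs_sub_le (by linarith) hz.1.2 hfp.1.2 (by rwa [mul_comm])

lemma accPt_logisticInvariantSet {a p : ℝ} (ha : 4 < a) (hslope : 1 < logisticMinSlope a)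
    (hp : p ∈ logisticInvariantSet a) :
    AccPt p (Filter.principal (logisticInvariantSet a)) := by
  rw [accPt_iff_nhds]
  intro U hU
  obtain ⟨ε, hε, hball⟩ := Metric.mem_nhds_iff.1 hU
  obtain ⟨n, hn⟩ := pow_unbounded_of_one_lt (1 / ε) hslope
  obtain ⟨q, hq, hne, hdist⟩ := exists_ne_mem_logisticInvariantSet ha (by linarith) n hp
  refine ⟨q, ⟨hball ?_, hq⟩, hne⟩
  rw [Metric.mem_ball, Real.dist_eq]
  rw [div_lt_iff₀ hε] at hn
  exact lt_of_mul_lt_mul_left (hdist.trans_lt hn) (by positivity)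

/-- For `a > 4`, if `|f_a'(x)| > 1` for every `x ∈ [0,1]` with `f_a x ≤ 1`, then the set
`Λ = {x ∈ [0,1] : ∀ n, f_a^[n] x ∈ [0,1]}` is a Cantor set: closed, totally disconnected
(contains no nondegenerate interval), and perfect (no isolated points). -/
theorem logistic_invariant_set_is_cantor (a : ℝ) (ha : 4 < a)
    (hderiv : ∀ x ∈ Set.Icc (0 : ℝ) 1, logisticMap a x ≤ 1 → 1 < |deriv (logisticMap a) x|) :
    IsClosed {x : ℝ | x ∈ Set.Icc (0 : ℝ) 1 ∧ ∀ n : ℕ,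
        (logisticMap a)^[n] x ∈ Set.Icc (0 : ℝ) 1} ∧
    (∀ x y : ℝ, x < y → ¬ Set.Icc x y ⊆ {x : ℝ | x ∈ Set.Icc (0 : ℝ) 1 ∧ ∀ n : ℕ,
        (logisticMap a)^[n] x ∈ Set.Icc (0 : ℝ) 1}) ∧
    (∀ p ∈ {x : ℝ | x ∈ Set.Icc (0 : ℝ) 1 ∧ ∀ n : ℕ,
        (logisticMap a)^[n] x ∈ Set.Icc (0 : ℝ) 1},
      AccPt p (Filter.principal {x : ℝ | x ∈ Set.Icc (0 : ℝ) 1 ∧ ∀ n : ℕ,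
        (logisticMap a)^[n] x ∈ Set.Icc (0 : ℝ) 1})) := by
  have hslope := one_lt_logisticMinSlope ha hderiv
  exact ⟨isClosed_logisticInvariantSet a,
    fun _ _ hxy => not_Icc_subset_logisticInvariantSet ha hslope hxy,
    fun _ hp => accPt_logisticInvariantSet ha hslope hp⟩
end

section
/- Let a > 4 and f_a(x) = a·x·(1−x). If x ∈ ℝ satisfies f_a(x) > 1, then the sequence of iterates f_a^[n](x) tends to −∞ as n → ∞. -/
open Filter

lemma logisticMap_le_mul {a : ℝ} (ha : 0 ≤ a) (y : ℝ) : logisticMap a y ≤ a * y := by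
  unfold logisticMap
  nlinarith [mul_nonneg ha (sq_nonneg y)]

lemma logisticMap_iterate_le {a : ℝ} (ha : 0 ≤ a) (y : ℝ) (n : ℕ) :
    (logisticMap a)^[n] y ≤ a ^ n * y := by
  induction n with
  | zero => simp
  | succ n ih =>
    rw [Function.iterate_succ_apply', pow_succ', mul_assoc]
    exact (logisticMap_le_mul ha _).trans (mul_le_mul_of_nonneg_left ih ha)

lemma tendsto_logisticMap_iterate_atBot_of_neg {a : ℝ} (ha : 1 < a) {y : ℝ} (hy : y < 0) :
    Tendsto (fun n : ℕ => (logisticMap a)^[n] y) atTop atBot :=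
  tendsto_atBot_mono (logisticMap_iterate_le (by linarith) y)
    ((tendsto_pow_atTop_atTop_of_one_lt ha).atTop_mul_const_of_neg hy)

lemma logisticMap_neg_of_one_lt {a : ℝ} (ha : 0 < a) {y : ℝ} (hy : 1 < y) :
    logisticMap a y < 0 :=
  mul_neg_of_pos_of_neg (mul_pos ha (by linarith)) (by linarith)

/-- For `a > 4`, if `f_a x > 1` then the iterates `f_a^[n] x` tend to `-∞`. -/
theorem logistic_escape_tendsto_atBot (a : ℝ) (ha : 4 < a) (x : ℝ)
    (hx : 1 < logisticMap a x) :
    Filter.Tendsto (fun n : ℕ => (logisticMap a)^[n] x) Filter.atTop Filter.atBot := by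
  rw [← tendsto_add_atTop_iff_nat 2]
  exact tendsto_logisticMap_iterate_atBot_of_neg (by linarith)
    (logisticMap_neg_of_one_lt (by linarith) hx)
end
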